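/- Let Ω ⊂ ℝ^d be a bounded domain, T > 0, Ω_T = (0,T) × Ω, M an N-function on Ω_T with convex conjugate M*, and let A : Ω_T × ℝ^d → ℝ^d satisfy: (A1) A is a Carathéodory function; (A2) there are c > 0 and h ∈ L^∞(Ω_T) with M(t,x,ξ) + M*(t,x, A(t,x,ξ)) ≤ c·A(t,x,ξ)·ξ + h(t,x) for a.e. (t,x) and all ξ; (A3) (A(t,x,ξ) − A(t,x,η))·(ξ − η) ≥ 0 for all ξ, η and a.e. (t,x); (A4) A(t,x,0) = 0 for a.e. (t,x). Assume α : Ω_T → ℝ^d is measurable with ∫_{Ω_T} M*(t,x, α/λ₁) dt dx < ∞ for some λ₁ > 0, and ξ : Ω_T → ℝ^d is measurable with ∫_{Ω_T} M(t,x, ξ/λ₂) dt dx < ∞ for some λ₂ > 0, and suppose that for every bounded measurable η : Ω_T → ℝ^d and every ψ ∈ C_c^∞(Ω) with 0 ≤ ψ ≤ 1, ∫_{Ω_T} (α(t,x) − A(t,x, η(t,x)))·(ξ(t,x) − η(t,x))·ψ(x) dt dx ≥ 0. Then A(t,x, ξ(t,x)) = α(t,x) for a.e. (t,x) ∈ Ω_T.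 -/

import Mathlib

open Filter Set MeasureTheory

/-- A Young function: `m : [0,∞) → [0,∞)` with `m(s) = 0 ↔ s = 0`, convex,
and superlinear: `m(s)/s → 0` as `s → 0⁺` and `m(s)/s → ∞` as `s → ∞`. -/
def IsYoung (m : ℝ → ℝ) : Prop :=
  (∀ s, 0 ≤ s → 0 ≤ m s) ∧
  (∀ s, 0 ≤ s → (m s = 0 ↔ s = 0)) ∧
  ConvexOn ℝ (Set.Ici 0) m ∧
  Tendsto (fun s => m s / s) (nhdsWithin 0 (Set.Ioi 0)) (nhds 0) ∧
  Tendsto (fun s => m s / s) atTop atTop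

/-- The measure on `Ω_T = (0,T) × Ω` (Lebesgue measure restricted to `(0,T) × Ω`). -/
noncomputable def parMeasure {d : ℕ} (Ω : Set (EuclideanSpace ℝ (Fin d))) (T : ℝ) :
    Measure (ℝ × EuclideanSpace ℝ (Fin d)) :=
  volume.restrict (Set.Ioo 0 T ×ˢ Ω)

/-- An `N`-function on `Ω_T`: even and convex in `ξ`, Carathéodory, and sandwiched between
two Young functions. -/
def IsNFunction {d : ℕ} (μ : Measure (ℝ × EuclideanSpace ℝ (Fin d)))
    (M : ℝ × EuclideanSpace ℝ (Fin d) → EuclideanSpace ℝ (Fin d) → ℝ) : Prop :=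
  (∀ᵐ p ∂μ, ∀ ξ, M p ξ = M p (-ξ)) ∧
  (∀ᵐ p ∂μ, Continuous (M p)) ∧
  (∀ ξ, Measurable fun p => M p ξ) ∧
  (∀ᵐ p ∂μ, ConvexOn ℝ Set.univ (M p)) ∧
  ∃ m₁ m₂, IsYoung m₁ ∧ IsYoung m₂ ∧
    ∀ᵐ p ∂μ, ∀ ξ, m₁ ‖ξ‖ ≤ M p ξ ∧ M p ξ ≤ m₂ ‖ξ‖

/-- The convex conjugate `M*(t,x,η) = sup_{ξ ∈ ℝ^d} (ξ·η − M(t,x,ξ))`. -/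
noncomputable def nConj {d : ℕ}
    (M : ℝ × EuclideanSpace ℝ (Fin d) → EuclideanSpace ℝ (Fin d) → ℝ)
    (p : ℝ × EuclideanSpace ℝ (Fin d)) (η : EuclideanSpace ℝ (Fin d)) : ℝ :=
  sSup (Set.range fun ξ => (@inner ℝ _ _ ξ η) - M p ξ)

/-!
Let `v = α - A(·, ξ)`. On a set `S` of finite measure where `ξ`, `v` and the functions
`(α - A(·, ξ + v / (n + 1))) · v` are bounded, test the inequality with `η = ξ + t v 1_S` on
`{|ξ| ≤ k}` and `η = 0` on `{|ξ| > k}`. The part over `{|ξ| > k}` is a tail of the integrable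
function `(α - A(·, 0)) · ξ` and disappears as `k → ∞`; dividing by `-t` leaves
`∫_S (α - A(·, ξ + t v)) · v ≤ 0`. Letting `t = 1 / (n + 1) → 0` gives `∫_S |v|² ≤ 0`.
Continuity of `A(t, x, ·)` makes the sequence bounded at every point, so such sets `S` exhaust the
space. A cut-off `ψ` enters only as a density of the underlying measure, and the N-function only
through the Fenchel-Young inequality, which makes `α · ξ` integrable.
-/

open scoped Topology RealInnerProductSpace

section Caratheodory

variable {X E F : Type*} [MeasurableSpace X] {μ : Measure X}
  [TopologicalSpace E] [TopologicalSpace F] [MeasurableSpace F]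

lemma exists_continuous_measurable_ae_eq [Nonempty F] {G : X → E → F}
    (hGc : ∀ᵐ p ∂μ, Continuous (G p)) (hGm : ∀ e, Measurable fun p => G p e) :
    ∃ G' : X → E → F, (∀ p, Continuous (G' p)) ∧ (∀ e, Measurable fun p => G' p e) ∧
      ∀ᵐ p ∂μ, G' p = G p := by
  classical
  obtain ⟨N, hN, hNm, hN0⟩ := exists_measurable_superset_of_null (ae_iff.1 hGc)
  let G₀ : X → E → F := fun _ _ => Classical.arbitrary F
  refine ⟨N.piecewise G₀ G, fun p => ?_, fun e => ?_, ?_⟩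
  · by_cases hp : p ∈ N
    · simpa only [piecewise_eq_of_mem _ _ _ hp] using! continuous_const
    · simpa only [piecewise_eq_of_notMem _ _ _ hp] using not_not.1 (mt (@hN p) hp)
  · have : (fun p => N.piecewise G₀ G p e) = N.piecewise (fun p => G₀ p e) fun p => G p e := by
      ext p
      by_cases hp : p ∈ N <;> simp [hp]
    rw [this]
    exact measurable_const.piecewise hNm (hGm e)
  · filter_upwards [measure_eq_zero_iff_ae_notMem.1 hN0] with p hp
    exact piecewise_eq_of_notMem _ _ _ hp

variable [TopologicalSpace.MetrizableSpace E] [SecondCountableTopology E] [MeasurableSpace E]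
  [OpensMeasurableSpace E] [TopologicalSpace.PseudoMetrizableSpace F] [BorelSpace F]

lemma measurable_comp_of_continuous_of_measurable {G : X → E → F}
    (hGc : ∀ p, Continuous (G p)) (hGm : ∀ e, Measurable fun p => G p e)
    {η : X → E} (hη : Measurable η) : Measurable fun p => G p (η p) :=
  (measurable_uncurry_of_continuous_of_measurable (u := fun e p => G p e) hGc hGm).comp
    (hη.prodMk measurable_id)

lemma aemeasurable_comp_of_continuous_of_measurable [Nonempty F] {G : X → E → F}
    (hGc : ∀ᵐ p ∂μ, Continuous (G p)) (hGm : ∀ e, Measurable fun p => G p e)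
    {η : X → E} (hη : Measurable η) : AEMeasurable (fun p => G p (η p)) μ := by
  obtain ⟨G', hG'c, hG'm, hG'⟩ := exists_continuous_measurable_ae_eq hGc hGm
  exact ⟨_, measurable_comp_of_continuous_of_measurable hG'c hG'm hη,
    hG'.mono fun p hp => by simp only [hp]⟩

end Caratheodory

section FenchelYoung

lemma bddAbove_range_inner_sub {E : Type*} [NormedAddCommGroup E] [InnerProductSpace ℝ E]
    {m : ℝ → ℝ} (hm₀ : ∀ s, 0 ≤ s → 0 ≤ m s) (hm : Tendsto (fun s => m s / s) atTop atTop)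
    {f : E → ℝ} (hf : ∀ ξ, m ‖ξ‖ ≤ f ξ) (η : E) :
    BddAbove (range fun ξ => ⟪ξ, η⟫ - f ξ) := by
  obtain ⟨R, hR⟩ := (hm.eventually_ge_atTop ‖η‖).exists_forall_of_atTop
  refine ⟨max R 1 * ‖η‖, forall_mem_range.2 fun ξ => ?_⟩
  have hinner : ⟪ξ, η⟫ ≤ ‖ξ‖ * ‖η‖ := real_inner_le_norm ξ η
  rcases le_total ‖ξ‖ (max R 1) with hξ | hξ
  · have hnear : ‖ξ‖ * ‖η‖ ≤ max R 1 * ‖η‖ := by gcongr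
    linarith [hf ξ, hm₀ ‖ξ‖ (norm_nonneg ξ)]
  · have hξ_pos : 0 < ‖ξ‖ := (lt_max_of_lt_right one_pos).trans_le hξ
    have hfar : ‖η‖ * ‖ξ‖ ≤ m ‖ξ‖ := (le_div_iff₀ hξ_pos).1 (hR ‖ξ‖ ((le_max_left R 1).trans hξ))
    have hbound : 0 ≤ max R 1 * ‖η‖ := by positivity
    linarith [hf ξ, mul_comm ‖ξ‖ ‖η‖]

variable {d : ℕ} {M : ℝ × EuclideanSpace ℝ (Fin d) → EuclideanSpace ℝ (Fin d) → ℝ}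
  {p : ℝ × EuclideanSpace ℝ (Fin d)}

lemma inner_le_add_nConj {m : ℝ → ℝ} (hm : IsYoung m) (hM : ∀ ξ, m ‖ξ‖ ≤ M p ξ)
    (ξ η : EuclideanSpace ℝ (Fin d)) : ⟪ξ, η⟫ ≤ M p ξ + nConj M p η := by
  obtain ⟨hm₀, -, -, -, hm_top⟩ := hm
  have hsup : ⟪ξ, η⟫ - M p ξ ≤ nConj M p η :=
    le_csSup (bddAbove_range_inner_sub hm₀ hm_top hM η) (mem_range_self ξ)
  linarith

lemma abs_inner_le_add_nConj {m : ℝ → ℝ} (hm : IsYoung m) (hM : ∀ ξ, m ‖ξ‖ ≤ M p ξ)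
    (heven : ∀ ξ, M p ξ = M p (-ξ)) (ξ η : EuclideanSpace ℝ (Fin d)) :
    |⟪ξ, η⟫| ≤ M p ξ + nConj M p η := by
  have hneg := inner_le_add_nConj hm hM (-ξ) η
  rw [inner_neg_left, ← heven] at hneg
  exact abs_le'.2 ⟨inner_le_add_nConj hm hM ξ η, hneg⟩

lemma IsNFunction.integrable_inner {μ : Measure (ℝ × EuclideanSpace ℝ (Fin d))}
    (hM : IsNFunction μ M) {α ξ : ℝ × EuclideanSpace ℝ (Fin d) → EuclideanSpace ℝ (Fin d)}
    (hα : Measurable α) (hξ : Measurable ξ)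
    (hαL : ∃ lam > (0 : ℝ), ∫⁻ p, ENNReal.ofReal (nConj M p (lam⁻¹ • α p)) ∂μ < ⊤)
    (hξL : ∃ lam > (0 : ℝ), ∫⁻ p, ENNReal.ofReal (M p (lam⁻¹ • ξ p)) ∂μ < ⊤) :
    Integrable (fun p => ⟪α p, ξ p⟫) μ := by
  obtain ⟨lα, hlα, hα_fin⟩ := hαL
  obtain ⟨lξ, hlξ, hξ_fin⟩ := hξL
  obtain ⟨heven, hMc, hMm, -, m₁, m₂, hm₁, -, hbound⟩ := hM
  have hξ' : Measurable fun p => lξ⁻¹ • ξ p := hξ.const_smul lξ⁻¹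
  have hα' : Measurable fun p => lα⁻¹ • α p := hα.const_smul lα⁻¹
  have hMξ : AEMeasurable (fun p => ENNReal.ofReal (M p (lξ⁻¹ • ξ p))) μ :=
    (aemeasurable_comp_of_continuous_of_measurable hMc hMm hξ').ennreal_ofReal
  have hscaled : Integrable (fun p => ⟪lξ⁻¹ • ξ p, lα⁻¹ • α p⟫) μ := by
    refine ⟨(hξ'.inner hα').aestronglyMeasurable, ?_⟩
    rw [hasFiniteIntegral_iff_norm]
    calc ∫⁻ p, ENNReal.ofReal ‖⟪lξ⁻¹ • ξ p, lα⁻¹ • α p⟫‖ ∂μ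
        ≤ ∫⁻ p, (ENNReal.ofReal (M p (lξ⁻¹ • ξ p)) +
            ENNReal.ofReal (nConj M p (lα⁻¹ • α p))) ∂μ := by
          refine lintegral_mono_ae ?_
          filter_upwards [heven, hbound] with p hp_even hp
          exact (ENNReal.ofReal_le_ofReal (abs_inner_le_add_nConj hm₁ (fun ζ => (hp ζ).1)
            hp_even _ _)).trans ENNReal.ofReal_add_le
      _ < ⊤ := by
          rw [lintegral_add_left' hMξ]
          exact ENNReal.add_lt_top.2 ⟨hξ_fin, hα_fin⟩
  refine (hscaled.const_mul (lα * lξ)).congr (ae_of_all _ fun p => ?_)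
  simp only [real_inner_smul_right, real_inner_comm (α p)]
  field_simp

end FenchelYoung

lemma tendsto_setIntegral_natCast_lt {X : Type*} [MeasurableSpace X] {μ : Measure X}
    {f g : X → ℝ} (hf : Integrable f μ) (hg : Measurable g) :
    Tendsto (fun k : ℕ => ∫ p in {p | (k : ℝ) < g p}, f p ∂μ) atTop (𝓝 0) := by
  have hempty : ⋂ k : ℕ, {p | (k : ℝ) < g p} = ∅ := by
    refine eq_empty_of_forall_notMem fun p hp => ?_
    obtain ⟨k, hk⟩ := exists_nat_ge (g p)
    exact hk.not_gt (mem_iInter.1 hp k)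
  have hlim := tendsto_setIntegral_of_antitone
    (fun k : ℕ => measurableSet_lt (measurable_const (a := (k : ℝ))) hg)
    (fun k l hkl p (hp : (l : ℝ) < g p) => (Nat.cast_le.2 hkl).trans_lt hp)
    ⟨0, hf.integrableOn⟩
  rwa [hempty, setIntegral_empty] at hlim

section Minty

variable {X E : Type*} [NormedAddCommGroup E] [InnerProductSpace ℝ E] {A : X → E → E} {α ξ : X → E}

variable (A α ξ) in
/-- The pairing of `α - A(·, ξ + v / (n + 1))` with the defect `v = α - A(·, ξ)`: the limit
`n → ∞` turns the Minty inequality for `η = ξ + v / (n + 1)` into a bound on `‖v‖ ^ 2`. -/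
noncomputable def defectPairing (n : ℕ) (p : X) : ℝ :=
  ⟪α p - A p (ξ p + (1 / ((n : ℝ) + 1)) • (α p - A p (ξ p))), α p - A p (ξ p)⟫

lemma tendsto_defectPairing {p : X} (hA : Continuous (A p)) :
    Tendsto (fun n => defectPairing A α ξ n p) atTop (𝓝 (‖α p - A p (ξ p)‖ ^ 2)) := by
  have hcont : Continuous fun t : ℝ =>
      ⟪α p - A p (ξ p + t • (α p - A p (ξ p))), α p - A p (ξ p)⟫ := by fun_prop
  have hlim := (hcont.tendsto 0).comp tendsto_one_div_add_atTop_nhds_zero_nat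
  simp only [zero_smul, add_zero, real_inner_self_eq_norm_sq] at hlim
  exact hlim

variable [MeasurableSpace X] [MeasurableSpace E] {μ : Measure X}

lemma measurable_defectPairing [BorelSpace E] [SecondCountableTopology E]
    (hAc : ∀ p, Continuous (A p)) (hAm : ∀ e, Measurable fun p => A p e)
    (hα : Measurable α) (hξ : Measurable ξ) (n : ℕ) :
    Measurable (defectPairing A α ξ n) := by
  have hv : Measurable fun p => α p - A p (ξ p) :=
    hα.sub (measurable_comp_of_continuous_of_measurable hAc hAm hξ)
  exact (hα.sub (measurable_comp_of_continuous_of_measurable hAc hAm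
    (hξ.add (hv.const_smul _)))).inner hv

/-- The integrated Minty inequality `∫ (α - A(·, η)) · (ξ - η) dμ ≥ 0`, tested against all bounded
measurable `η`. The integral is the Bochner integral, so the condition is empty for those `η` for
which the integrand is not integrable. -/
def MintyInequality (μ : Measure X) (A : X → E → E) (α ξ : X → E) : Prop :=
  ∀ η : X → E, Measurable η → (∃ B : ℝ, ∀ p, ‖η p‖ ≤ B) →
    0 ≤ ∫ p, ⟪α p - A p (η p), ξ p - η p⟫ ∂μ

namespace MintyInequality

lemma congr_ae {A' : X → E → E} (h : MintyInequality μ A α ξ) (hA : ∀ᵐ p ∂μ, A' p = A p) :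
    MintyInequality μ A' α ξ := by
  intro η hη hηB
  refine (h η hη hηB).trans_eq (integral_congr_ae ?_)
  filter_upwards [hA] with p hp
  rw [hp]

lemma of_weight {w : X → ℝ} (hw : Measurable w) (hw₀ : ∀ p, 0 ≤ w p)
    (h : ∀ η : X → E, Measurable η → (∃ B : ℝ, ∀ p, ‖η p‖ ≤ B) →
      0 ≤ ∫ p, ⟪α p - A p (η p), ξ p - η p⟫ * w p ∂μ) :
    MintyInequality (μ.withDensity fun p => ENNReal.ofReal (w p)) A α ξ := by
  intro η hη hηB
  rw [integral_withDensity_eq_integral_toReal_smul hw.ennreal_ofReal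
    (ae_of_all _ fun _ => ENNReal.ofReal_lt_top)]
  simpa only [ENNReal.toReal_ofReal (hw₀ _), smul_eq_mul, mul_comm (w _)] using h η hη hηB

variable [BorelSpace E] [SecondCountableTopology E]

lemma integral_inner_add_nonpos (h : MintyInequality μ A α ξ) (hξ : Measurable ξ)
    (hαξ : Integrable (fun p => ⟪α p - A p 0, ξ p⟫) μ) {z : X → E} (hz : Measurable z)
    {B R : ℝ} (hzB : ∀ p, ‖z p‖ ≤ B) (hzξ : ∀ p, R < ‖ξ p‖ → z p = 0)
    (hAz : Integrable (fun p => ⟪α p - A p (ξ p + z p), z p⟫) μ) :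
    ∫ p, ⟪α p - A p (ξ p + z p), z p⟫ ∂μ ≤ 0 := by
  refine ge_of_tendsto (tendsto_setIntegral_natCast_lt hαξ hξ.norm) ?_
  filter_upwards [eventually_ge_atTop ⌈R⌉₊] with k hk
  have hRk : R ≤ k := Nat.ceil_le.1 hk
  let tail : Set X := {p | k < ‖ξ p‖}
  have htail : MeasurableSet tail := measurableSet_lt measurable_const hξ.norm
  let η : X → E := tailᶜ.indicator (ξ + z)
  have hη_tail : ∀ p ∈ tail, η p = 0 := fun p hp => indicator_of_notMem (not_not.2 hp) _
  have hη_compl : ∀ p ∉ tail, η p = ξ p + z p := fun p hp => indicator_of_mem hp _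
  have hηB : ∀ p, ‖η p‖ ≤ k + B := by
    intro p
    have hB : 0 ≤ B := (norm_nonneg _).trans (hzB p)
    by_cases hp : p ∈ tail
    · rw [hη_tail p hp, norm_zero]
      positivity
    · rw [hη_compl p hp]
      exact norm_add_le_of_le (not_lt.1 hp) (hzB p)
  have hsplit : ∀ p, ⟪α p - A p (η p), ξ p - η p⟫ =
      tail.indicator (fun p => ⟪α p - A p 0, ξ p⟫) p - ⟪α p - A p (ξ p + z p), z p⟫ := by
    intro p
    by_cases hp : p ∈ tail
    · simp [hη_tail p hp, hp, hzξ p (hRk.trans_lt hp)]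
    · simp [hη_compl p hp, hp]
  have htest := h η ((hξ.add hz).indicator htail.compl) ⟨_, hηB⟩
  simp only [hsplit] at htest
  rwa [integral_sub (hαξ.indicator htail) hAz, integral_indicator htail, sub_nonneg] at htest

lemma setIntegral_inner_smul_nonpos (h : MintyInequality μ A α ξ) (hξ : Measurable ξ)
    (hαξ : Integrable (fun p => ⟪α p - A p 0, ξ p⟫) μ) {v : X → E} (hv : Measurable v)
    {S : Set X} (hS : MeasurableSet S) {C : ℝ} (hξC : ∀ p ∈ S, ‖ξ p‖ ≤ C)
    (hvC : ∀ p ∈ S, ‖v p‖ ≤ C) {t : ℝ} (ht : 0 < t)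
    (hint : IntegrableOn (fun p => ⟪α p - A p (ξ p + t • v p), v p⟫) S μ) :
    ∫ p in S, ⟪α p - A p (ξ p + t • v p), v p⟫ ∂μ ≤ 0 := by
  let z : X → E := S.indicator fun p => t • v p
  have hz : Measurable z := (hv.const_smul t).indicator hS
  have hzC : ∀ p, ‖z p‖ ≤ t * |C| := by
    intro p
    by_cases hp : p ∈ S
    · rw [show z p = t • v p from indicator_of_mem hp _, norm_smul, Real.norm_of_nonneg ht.le]
      gcongr
      exact (hvC p hp).trans (le_abs_self C)
    · rw [show z p = 0 from indicator_of_notMem hp _, norm_zero]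
      positivity
  have hzξ : ∀ p, C < ‖ξ p‖ → z p = 0 := fun p hp =>
    indicator_of_notMem (fun hpS => (hξC p hpS).not_gt hp) _
  have hinner : (fun p => ⟪α p - A p (ξ p + z p), z p⟫) =
      S.indicator fun p => t * ⟪α p - A p (ξ p + t • v p), v p⟫ := by
    ext p
    by_cases hp : p ∈ S <;> simp [z, hp, real_inner_smul_right]
  have hle := h.integral_inner_add_nonpos hξ hαξ hz hzC hzξ
    (hinner ▸ (integrable_indicator_iff hS).2 (hint.const_mul t))
  rw [hinner, integral_indicator hS, integral_const_mul] at hle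
  exact nonpos_of_mul_nonpos_right hle ht

lemma ae_eq_on_of_bounded (h : MintyInequality μ A α ξ) (hAc : ∀ p, Continuous (A p))
    (hAm : ∀ e, Measurable fun p => A p e) (hα : Measurable α) (hξ : Measurable ξ)
    (hαξ : Integrable (fun p => ⟪α p - A p 0, ξ p⟫) μ)
    {S : Set X} (hS : MeasurableSet S) (hμS : μ S < ⊤) {C : ℝ} (hξC : ∀ p ∈ S, ‖ξ p‖ ≤ C)
    (hvC : ∀ p ∈ S, ‖α p - A p (ξ p)‖ ≤ C)
    (hgC : ∀ n, ∀ p ∈ S, |defectPairing A α ξ n p| ≤ C) :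
    ∀ᵐ p ∂μ, p ∈ S → A p (ξ p) = α p := by
  have : IsFiniteMeasure (μ.restrict S) := ⟨by rwa [Measure.restrict_apply_univ]⟩
  have hv : Measurable fun p => α p - A p (ξ p) :=
    hα.sub (measurable_comp_of_continuous_of_measurable hAc hAm hξ)
  have hg := measurable_defectPairing hAc hAm hα hξ
  have hgC' : ∀ n, ∀ᵐ p ∂μ.restrict S, ‖defectPairing A α ξ n p‖ ≤ C := fun n =>
    ae_restrict_of_forall_mem hS (hgC n)
  have hg_nonpos : ∀ n, ∫ p in S, defectPairing A α ξ n p ∂μ ≤ 0 := fun n =>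
    h.setIntegral_inner_smul_nonpos hξ hαξ hv hS hξC hvC Nat.one_div_pos_of_nat
      (Integrable.of_bound (hg n).aestronglyMeasurable C (hgC' n))
  have hlim : Tendsto (fun n => ∫ p in S, defectPairing A α ξ n p ∂μ) atTop
      (𝓝 (∫ p in S, ‖α p - A p (ξ p)‖ ^ 2 ∂μ)) :=
    tendsto_integral_of_dominated_convergence _ (fun n => (hg n).aestronglyMeasurable)
      (integrable_const C) hgC' (ae_of_all _ fun p => tendsto_defectPairing (hAc p))
  have hsq_int : IntegrableOn (fun p => ‖α p - A p (ξ p)‖ ^ 2) S μ := by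
    refine Integrable.of_bound (hv.norm.pow_const 2).aestronglyMeasurable (C ^ 2)
      (ae_restrict_of_forall_mem hS fun p hp => ?_)
    rw [norm_pow, norm_norm]
    exact pow_le_pow_left₀ (norm_nonneg _) (hvC p hp) 2
  have hsq_nonneg : 0 ≤ fun p => ‖α p - A p (ξ p)‖ ^ 2 := fun p => sq_nonneg _
  have hsq_zero : (fun p => ‖α p - A p (ξ p)‖ ^ 2) =ᵐ[μ.restrict S] 0 :=
    (integral_eq_zero_iff_of_nonneg hsq_nonneg hsq_int).1
      ((le_of_tendsto' hlim hg_nonpos).antisymm (integral_nonneg hsq_nonneg))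
  filter_upwards [(ae_restrict_iff' hS).1 hsq_zero] with p hp hpS
  exact (sub_eq_zero.1 (norm_eq_zero.1 (sq_eq_zero_iff.1 (hp hpS)))).symm

lemma ae_eq_of_forall_continuous [SigmaFinite μ] (h : MintyInequality μ A α ξ)
    (hAc : ∀ p, Continuous (A p)) (hAm : ∀ e, Measurable fun p => A p e) (hα : Measurable α)
    (hξ : Measurable ξ) (hαξ : Integrable (fun p => ⟪α p - A p 0, ξ p⟫) μ) :
    ∀ᵐ p ∂μ, A p (ξ p) = α p := by
  let S : ℕ → Set X := fun j => {p | ‖ξ p‖ ≤ j ∧ ‖α p - A p (ξ p)‖ ≤ j ∧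
    ∀ n, |defectPairing A α ξ n p| ≤ j} ∩ spanningSets μ j
  have hv : Measurable fun p => α p - A p (ξ p) :=
    hα.sub (measurable_comp_of_continuous_of_measurable hAc hAm hξ)
  have hg := measurable_defectPairing hAc hAm hα hξ
  have hS : ∀ j, MeasurableSet (S j) := fun j =>
    ((measurableSet_le hξ.norm measurable_const).inter
      ((measurableSet_le hv.norm measurable_const).inter
        (measurableSet_setOfPred.2 (Measurable.forall fun n => measurableSet_setOfPred.1
          (measurableSet_le (hg n).norm measurable_const))))).inter
      (measurableSet_spanningSets μ j)
  have hS_cover : ∀ p, ∃ j, p ∈ S j := by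
    intro p
    obtain ⟨C, hC⟩ := isBounded_iff_forall_norm_le.1
      (Metric.isBounded_range_of_tendsto _ (tendsto_defectPairing (α := α) (ξ := ξ) (hAc p)))
    have hlarge := tendsto_natCast_atTop_atTop (R := ℝ)
    obtain ⟨j, hξj, hvj, hCj, hj⟩ := ((hlarge.eventually_ge_atTop ‖ξ p‖).and
      ((hlarge.eventually_ge_atTop ‖α p - A p (ξ p)‖).and
        ((hlarge.eventually_ge_atTop C).and (eventually_mem_spanningSets μ p)))).exists
    exact ⟨j, ⟨hξj, hvj, fun n => (hC _ (mem_range_self n)).trans hCj⟩, hj⟩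
  have hae : ∀ᵐ p ∂μ, ∀ j, p ∈ S j → A p (ξ p) = α p := ae_all_iff.2 fun j =>
    h.ae_eq_on_of_bounded hAc hAm hα hξ hαξ (hS j)
      ((measure_mono inter_subset_right).trans_lt (measure_spanningSets_lt_top μ j))
      (fun _ hp => hp.1.1) (fun _ hp => hp.1.2.1) (fun n _ hp => hp.1.2.2 n)
  filter_upwards [hae] with p hp
  obtain ⟨j, hj⟩ := hS_cover p
  exact hp j hj

theorem ae_eq [SigmaFinite μ] (h : MintyInequality μ A α ξ)
    (hAc : ∀ᵐ p ∂μ, Continuous (A p)) (hAm : ∀ e, Measurable fun p => A p e) (hα : Measurable α)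
    (hξ : Measurable ξ) (hαξ : Integrable (fun p => ⟪α p - A p 0, ξ p⟫) μ) :
    ∀ᵐ p ∂μ, A p (ξ p) = α p := by
  obtain ⟨A', hA'c, hA'm, hA'⟩ := exists_continuous_measurable_ae_eq hAc hAm
  have hα'ξ : Integrable (fun p => ⟪α p - A' p 0, ξ p⟫) μ :=
    hαξ.congr (hA'.mono fun p hp => by simp only [hp])
  filter_upwards [(h.congr_ae hA').ae_eq_of_forall_continuous hA'c hA'm hα hξ hα'ξ, hA']
    with p hp hpA'
  rwa [← hpA']

end MintyInequality

lemma ae_eq_of_weighted_minty [BorelSpace E] [SecondCountableTopology E] [SigmaFinite μ]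
    (hAc : ∀ᵐ p ∂μ, Continuous (A p)) (hAm : ∀ e, Measurable fun p => A p e)
    (hα : Measurable α) (hξ : Measurable ξ)
    (hαξ : Integrable (fun p => ⟪α p - A p 0, ξ p⟫) μ)
    {w : X → ℝ} (hw : Measurable w) (hw01 : ∀ p, 0 ≤ w p ∧ w p ≤ 1)
    (h : ∀ η : X → E, Measurable η → (∃ B : ℝ, ∀ p, ‖η p‖ ≤ B) →
      0 ≤ ∫ p, ⟪α p - A p (η p), ξ p - η p⟫ * w p ∂μ) :
    ∀ᵐ p ∂μ, 0 < w p → A p (ξ p) = α p := by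
  let ν := μ.withDensity fun p => ENNReal.ofReal (w p)
  have hν : ν ≤ μ := by
    refine (withDensity_mono (ae_of_all _ fun p => ?_)).trans_eq (withDensity_one (μ := μ))
    exact ENNReal.ofReal_le_one.2 (hw01 p).2
  have hae : ∀ᵐ p ∂ν, A p (ξ p) = α p :=
    (MintyInequality.of_weight hw (fun p => (hw01 p).1) h).ae_eq (ae_mono hν hAc) hAm hα hξ
      (hαξ.mono_measure hν)
  simpa only [ne_eq, ENNReal.ofReal_eq_zero, not_le] using
    (ae_withDensity_iff hw.ennreal_ofReal).1 hae

end Minty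

lemma ae_mem_imp_of_locally {X V : Type*} [MeasurableSpace X] {μ : Measure X}
    [TopologicalSpace V] [SecondCountableTopology V] {π : X → V} {Ω : Set V} {P : X → Prop}
    (h : ∀ x ∈ Ω, ∃ U ∈ 𝓝[Ω] x, ∀ᵐ p ∂μ, π p ∈ U → P p) :
    ∀ᵐ p ∂μ, π p ∈ Ω → P p := by
  choose! U hU hUP using h
  obtain ⟨t, htΩ, ht, hcover⟩ := TopologicalSpace.countable_cover_nhdsWithin hU
  filter_upwards [(ae_ball_iff ht).2 fun x hx => hUP x (htΩ hx)] with p hp hpΩ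
  obtain ⟨x, hx, hpx⟩ := mem_iUnion₂.1 (hcover hpΩ)
  exact hp x hx hpx

theorem monotonicity_trick_general {Y V E : Type*} [MeasurableSpace Y]
    [NormedAddCommGroup V] [NormedSpace ℝ V] [FiniteDimensional ℝ V] [MeasurableSpace V]
    [BorelSpace V] [NormedAddCommGroup E] [InnerProductSpace ℝ E] [MeasurableSpace E]
    [BorelSpace E] [SecondCountableTopology E] {μ : Measure (Y × V)} [SigmaFinite μ]
    {Ω : Set V} (hΩ : IsOpen Ω) {A : Y × V → E → E} (hAc : ∀ᵐ p ∂μ, Continuous (A p))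
    (hAm : ∀ e, Measurable fun p => A p e) {α ξ : Y × V → E} (hα : Measurable α)
    (hξ : Measurable ξ) (hαξ : Integrable (fun p => ⟪α p - A p 0, ξ p⟫) μ)
    (h : ∀ η : Y × V → E, Measurable η → (∃ B : ℝ, ∀ p, ‖η p‖ ≤ B) →
      ∀ ψ : V → ℝ, ContDiff ℝ (⊤ : ℕ∞) ψ → HasCompactSupport ψ → tsupport ψ ⊆ Ω →
        (∀ x, 0 ≤ ψ x ∧ ψ x ≤ 1) →
        0 ≤ ∫ p, ⟪α p - A p (η p), ξ p - η p⟫ * ψ p.2 ∂μ) :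
    ∀ᵐ p ∂μ, p.2 ∈ Ω → A p (ξ p) = α p := by
  have := FiniteDimensional.proper_real V
  refine ae_mem_imp_of_locally fun x hx => ?_
  obtain ⟨ψ, hψΩ, hψ_compact, hψ, hψ01, hψx⟩ :=
    exists_contDiff_tsupport_subset (n := (⊤ : ℕ∞)) (hΩ.mem_nhds hx)
  have hψ_mem : ∀ y, 0 ≤ ψ y ∧ ψ y ≤ 1 := fun y => hψ01 (mem_range_self y)
  have hψ_pos : ∀ᶠ y in 𝓝 x, 0 < ψ y :=
    hψ.continuous.continuousAt.eventually_const_lt (hψx ▸ one_pos)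
  exact ⟨{y | 0 < ψ y}, mem_nhdsWithin_of_mem_nhds hψ_pos,
    ae_eq_of_weighted_minty hAc hAm hα hξ hαξ (hψ.continuous.measurable.comp measurable_snd)
      (fun p => hψ_mem p.2) fun η hη hηB => h η hη hηB ψ hψ hψ_compact hψΩ hψ_mem⟩

/-- Local monotonicity trick: if
`∫_{Ω_T} (α − A(t,x,η))·(ξ − η) ψ ≥ 0` for all bounded measurable `η` and all
`ψ ∈ C_c^∞(Ω)` with `0 ≤ ψ ≤ 1`, then `A(t,x,ξ(t,x)) = α(t,x)` a.e. in `Ω_T`. -/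
theorem monotonicity_trick {d : ℕ}
    (Ω : Set (EuclideanSpace ℝ (Fin d))) (T : ℝ) (hT : 0 < T)
    (hΩo : IsOpen Ω) (hΩb : Bornology.IsBounded Ω) (hΩne : Ω.Nonempty)
    (M : ℝ × EuclideanSpace ℝ (Fin d) → EuclideanSpace ℝ (Fin d) → ℝ)
    (hM : IsNFunction (parMeasure Ω T) M)
    (A : ℝ × EuclideanSpace ℝ (Fin d) → EuclideanSpace ℝ (Fin d) → EuclideanSpace ℝ (Fin d))
    -- (A1) Carathéodory
    (hA1cont : ∀ᵐ p ∂(parMeasure Ω T), Continuous (A p))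
    (hA1meas : ∀ ξ, Measurable fun p => A p ξ)
    -- (A2) coercivity and growth
    (c : ℝ) (hc : 0 < c) (h : ℝ × EuclideanSpace ℝ (Fin d) → ℝ) (hhm : Measurable h)
    (hb : ℝ) (hhb : ∀ᵐ p ∂(parMeasure Ω T), |h p| ≤ hb)
    (hA2 : ∀ᵐ p ∂(parMeasure Ω T), ∀ ξ,
      M p ξ + nConj M p (A p ξ) ≤ c * (@inner ℝ _ _ (A p ξ) ξ) + h p)
    -- (A3) monotonicity
    (hA3 : ∀ᵐ p ∂(parMeasure Ω T), ∀ ξ η,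
      0 ≤ (@inner ℝ _ _ (A p ξ - A p η) (ξ - η)))
    -- (A4)
    (hA4 : ∀ᵐ p ∂(parMeasure Ω T), A p 0 = 0)
    -- α ∈ L_{M*}(Ω_T), ξf ∈ L_M(Ω_T)
    (α : ℝ × EuclideanSpace ℝ (Fin d) → EuclideanSpace ℝ (Fin d)) (hαm : Measurable α)
    (hαL : ∃ lam > (0 : ℝ),
      ∫⁻ p, ENNReal.ofReal (nConj M p (lam⁻¹ • α p)) ∂(parMeasure Ω T) < ⊤)
    (ξf : ℝ × EuclideanSpace ℝ (Fin d) → EuclideanSpace ℝ (Fin d)) (hξm : Measurable ξf)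
    (hξL : ∃ lam > (0 : ℝ),
      ∫⁻ p, ENNReal.ofReal (M p (lam⁻¹ • ξf p)) ∂(parMeasure Ω T) < ⊤)
    -- the monotonicity inequality tested against bounded η and cut-offs ψ
    (hmono : ∀ η : ℝ × EuclideanSpace ℝ (Fin d) → EuclideanSpace ℝ (Fin d),
      Measurable η → (∃ B : ℝ, ∀ p, ‖η p‖ ≤ B) →
      ∀ ψ : EuclideanSpace ℝ (Fin d) → ℝ, ContDiff ℝ (⊤ : ℕ∞) ψ → HasCompactSupport ψ →
        tsupport ψ ⊆ Ω → (∀ x, 0 ≤ ψ x ∧ ψ x ≤ 1) →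
        0 ≤ ∫ p, (@inner ℝ _ _ (α p - A p (η p)) (ξf p - η p)) * ψ p.2 ∂(parMeasure Ω T)) :
    ∀ᵐ p ∂(parMeasure Ω T), A p (ξf p) = α p := by
  have : SigmaFinite (parMeasure Ω T) := inferInstanceAs (SigmaFinite (volume.restrict _))
  have hαξ : Integrable (fun p => ⟪α p - A p 0, ξf p⟫) (parMeasure Ω T) :=
    (hM.integrable_inner hαm hξm hαL hξL).congr
      (hA4.mono fun p hp => by simp only [hp, sub_zero])
  filter_upwards [monotonicity_trick_general hΩo hA1cont hA1meas hαm hξm hαξ hmono,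
    ae_restrict_mem (measurableSet_Ioo.prod hΩo.measurableSet)] with p hp hpΩ
  exact hp hpΩ.2
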